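/- Let n_1, n_2 ≥ 1 be integers and suppose there exists an integer e ≥ 0 such that p^e divides both n_1 and n_2 and n_1/p^e + n_2/p^e ≤ q. Then ζ(n_1)·ζ(n_2) = ζ(n_1, n_2) + ζ(n_2, n_1) + ζ(n_1 + n_2) in k_∞. -/

import Mathlib

/-!
The product `ζ(n₁) ζ(n₂)` is the sum of `a⁻ⁿ¹ b⁻ⁿ²` over all pairs `(a, b)` of monic polynomials;
all sums converge unconditionally because `k_∞` is complete and nonarchimedean
(`summable_zterm`). Pairs with `deg a > deg b` give `ζ(n₁, n₂)`, pairs with `deg a < deg b` give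
`ζ(n₂, n₁)`, so the claim is that the pairs of equal degree contribute `ζ(n₁ + n₂)`. This holds
degree by degree: with `S_d(n) = ∑ a⁻ⁿ` over monic `a` of degree `d`, one has
`S_d(n₁) S_d(n₂) = S_d(n₁ + n₂)` (`degree_powerSum_mul`).

Since `S_d(pᵉ m) = S_d(m) ^ pᵉ`, it suffices to treat exponents `r, s ≥ 1` with `r + s ≤ q`
(`powerSum_mul`). There the off-diagonal sum `∑ a⁻ʳ b⁻ˢ` over `a ≠ b` must vanish. Write
`b = a + c`, where `c` runs over the nonzero polynomials of degree less than `d`, and apply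
`1 / (a b) = (1 / c) (1 / a - 1 / b)` repeatedly, inserting powers `c⁻ʲ`
(`offDiag_sum_eq_zero`). The process ends in products `S_d(i) ∑ c⁻ʲ` with `i + j = r + s`,
`1 ≤ j ≤ q - 1`. For `j < q - 1` the sum over `c` vanishes by scaling with a generator of `𝔽_qˣ`
(`sum_inv_pow_eq_zero`); for `j = q - 1` the two products that arise are equal and cancel.
-/


/-!
Setting: `Fq` is a finite field with `q = Fintype.card Fq` elements and characteristic
`p = ringChar Fq`.  The field `k_∞ = 𝔽_q((1/θ))` is realized as `Kinf Fq`, the field of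
formal Laurent series over `Fq` in the variable `u = θ⁻¹`; thus `theta Fq = u⁻¹` plays
the role of `θ` (it is the single Hahn series supported in degree `-1`), and polynomials
in `θ` are evaluated in `Kinf Fq` via `Polynomial.aeval (theta Fq)`.  `KinfBar Fq` is a
fixed algebraic closure `k̄_∞` of `k_∞`.
-/

set_option synthInstance.maxHeartbeats 1000000
set_option maxHeartbeats 1000000

noncomputable section

variable (Fq : Type) [Field Fq] [Fintype Fq]

/-- `k_∞ = 𝔽_q((1/θ))`, with its `1/θ`-adic (valued) topology. -/
abbrev Kinf := LaurentSeries Fq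

/-- `θ ∈ k_∞`, the inverse of the Laurent-series variable. -/
def theta : Kinf Fq := HahnSeries.single (-1 : ℤ) (1 : Fq)

/-- The multizeta value `ζ(n 0, …, n (d-1))`: the sum, over all `d`-tuples of monic
polynomials `a i ∈ 𝔽_q[θ]` with `deg (a 0) > deg (a 1) > … > deg (a (d-1)) ≥ 0`, of
`1 / (a 0 ^ n 0 ⋯ a (d-1) ^ n (d-1))`, computed in `k_∞`. -/
def mzv (d : ℕ) (n : Fin d → ℕ) : Kinf Fq :=
  ∑' a : {a : Fin d → Polynomial Fq //
      (∀ i, (a i).Monic) ∧ ∀ i j : Fin d, i < j → (a j).degree < (a i).degree},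
    (∏ i, Polynomial.aeval (theta Fq) (a.1 i) ^ n i)⁻¹

/-- A fixed algebraic closure `k̄_∞` of `k_∞`. -/
abbrev KinfBar := AlgebraicClosure (Kinf Fq)

/-- The image of `θ` in `k̄_∞`. -/
def thetaBar : KinfBar Fq := algebraMap (Kinf Fq) (KinfBar Fq) (theta Fq)

/-- The fundamental period `π̃ = (−θ)^{q/(q−1)} ∏_{i≥1} (1−θ^{1−qⁱ})⁻¹` of the Carlitz
module, relative to a chosen `(q−1)`-st root `η` of `−θ` (so `(−θ)^{q/(q−1)} = η ^ q`);
the convergent product is computed in `k_∞` and mapped into `k̄_∞`. -/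
def pitilde (η : KinfBar Fq) : KinfBar Fq :=
  η ^ Fintype.card Fq *
    algebraMap (Kinf Fq) (KinfBar Fq)
      (∏' i : ℕ, (1 - theta Fq ^ ((1 : ℤ) - (Fintype.card Fq : ℤ) ^ (i + 1)))⁻¹)

/-- `k = 𝔽_q(θ)`, as a subfield of `k̄_∞`. -/
def kSub : Subfield (KinfBar Fq) :=
  Subfield.closure
    (Set.range (fun a : Fq => algebraMap (Kinf Fq) (KinfBar Fq) (algebraMap Fq (Kinf Fq) a)) ∪
      {thetaBar Fq})

/-- `k̄`, the algebraic closure of `k` inside `k̄_∞`. -/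
def kbar : IntermediateField (kSub Fq) (KinfBar Fq) :=
  algebraicClosure (kSub Fq) (KinfBar Fq)

/-! ### Power sums over a translate of a finite `F`-vector space -/

/-- Scaling by a generator `g` of `Fˣ` multiplies the sum by `g⁻ʲ`, which differs from `1` for
`1 ≤ j ≤ q - 2`; hence the sum vanishes. -/
theorem sum_inv_pow_eq_zero {F K W : Type*} [Field F] [Fintype F] [Field K] [Algebra F K]
    [AddCommGroup W] [Module F W] [Fintype W] [DecidableEq W] (φ : W →ₗ[F] K)
    {j : ℕ} (hj : 1 ≤ j) (hjq : j + 1 < Fintype.card F) :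
    ∑ c ∈ (Finset.univ : Finset W).erase 0, ((φ c)⁻¹) ^ j = 0 := by
  obtain ⟨g, hg⟩ := IsCyclic.exists_generator (α := Fˣ)
  have hgj : (g : F) ^ j ≠ 1 := by
    intro h1
    have h2 : g ^ j = 1 := Units.ext (by simpa using h1)
    have h3 := Nat.le_of_dvd (by omega) (orderOf_dvd_of_pow_eq_one h2)
    classical
    rw [orderOf_eq_card_of_forall_mem_zpowers hg, Nat.card_eq_fintype_card,
      Fintype.card_units] at h3
    omega
  have key : ∑ c ∈ (Finset.univ : Finset W).erase 0, ((φ c)⁻¹) ^ j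
      = (algebraMap F K g)⁻¹ ^ j * ∑ c ∈ (Finset.univ : Finset W).erase 0, ((φ c)⁻¹) ^ j := by
    rw [Finset.mul_sum]
    refine (Finset.sum_bij' (fun c _ => (g : F) • c) (fun c _ => (g : F)⁻¹ • c) ?_ ?_ ?_ ?_ ?_).symm
    · intro c hc; simpa using hc
    · intro c hc; simpa using hc
    · intro c hc; simp [smul_smul]
    · intro c hc; simp [smul_smul]
    · intro c hc
      rw [map_smul, Algebra.smul_def, mul_inv, mul_pow]
  have hne : (algebraMap F K g)⁻¹ ^ j ≠ 1 := by
    rw [inv_pow, ← map_pow]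
    intro h1
    exact hgj ((algebraMap F K).injective (by rw [map_one]; exact inv_eq_one.mp h1))
  by_contra h0
  exact hne (mul_right_cancel₀ h0 (by rw [one_mul]; exact key.symm))

/-- With `a = t + φ w` and `b = a + φ c`, the sum over all `a` and all `c ≠ 0` of
`c⁻ʲ a⁻ʳ b⁻ˢ` vanishes. Partial fractions lower `r + s` while raising `j`, keeping `j + r + s ≤ q`;
when `r` or `s` reaches `0` the sum factors, and the factor `∑ c⁻ʲ` vanishes unless `j = q - 1`.
In that last case `r = s = 1` just before, and the two boundary terms cancel. -/
theorem offDiag_sum_eq_zero {F K W : Type*} [Field F] [Fintype F] [Field K] [Algebra F K]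
    [AddCommGroup W] [Module F W] [Fintype W] [DecidableEq W] (φ : W →ₗ[F] K) (t : K)
    (hφ : Function.Injective φ) (ht : ∀ w, t + φ w ≠ 0) (N : ℕ) :
    ∀ j r s : ℕ, r + s = N → 1 ≤ r → 1 ≤ s → j + r + s ≤ Fintype.card F →
    ∑ c ∈ (Finset.univ : Finset W).erase 0, ∑ w : W,
      ((φ c)⁻¹) ^ j * (((t + φ w)⁻¹) ^ r * ((t + φ (w + c))⁻¹) ^ s) = 0 := by
  induction N with
  | zero => intros; omega
  | succ N ih =>
    intro j r s hN hr hs hq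
    obtain ⟨r, rfl⟩ : ∃ r', r = r' + 1 := ⟨r - 1, by omega⟩
    obtain ⟨s, rfl⟩ : ∃ s', s = s' + 1 := ⟨s - 1, by omega⟩
    have shift (m : ℕ) (c : W) : ∑ w : W, ((t + φ (w + c))⁻¹) ^ m = ∑ w : W, ((t + φ w)⁻¹) ^ m :=
      Fintype.sum_equiv (Equiv.addRight c) _ _ (fun w => rfl)
    -- partial fractions: `1/(a b) = (1/c) (1/a - 1/b)` when `b = a + c`
    have step : ∑ c ∈ (Finset.univ : Finset W).erase 0, ∑ w : W,
        ((φ c)⁻¹) ^ j * (((t + φ w)⁻¹) ^ (r + 1) * ((t + φ (w + c))⁻¹) ^ (s + 1))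
        = ∑ c ∈ (Finset.univ : Finset W).erase 0, ∑ w : W,
          ((φ c)⁻¹) ^ (j + 1) * (((t + φ w)⁻¹) ^ (r + 1) * ((t + φ (w + c))⁻¹) ^ s)
        - ∑ c ∈ (Finset.univ : Finset W).erase 0, ∑ w : W,
          ((φ c)⁻¹) ^ (j + 1) * (((t + φ w)⁻¹) ^ r * ((t + φ (w + c))⁻¹) ^ (s + 1)) := by
      rw [← Finset.sum_sub_distrib]
      refine Finset.sum_congr rfl fun c hc => ?_
      rw [← Finset.sum_sub_distrib]
      refine Finset.sum_congr rfl fun w _ => ?_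
      have hc0 : φ c ≠ 0 := by
        rw [Ne, map_eq_zero_iff φ hφ]; simpa using hc
      have h1 := ht w
      have h2 := ht (w + c)
      have h3 : (t + φ w)⁻¹ * (t + φ (w + c))⁻¹
          = (φ c)⁻¹ * ((t + φ w)⁻¹ - (t + φ (w + c))⁻¹) := by
        have h4 : φ c = (t + φ (w + c)) - (t + φ w) := by rw [map_add]; ring
        rw [inv_sub_inv h1 h2, ← h4]
        field_simp
      calc _ = ((φ c)⁻¹) ^ j * (((t + φ w)⁻¹) ^ r * ((t + φ (w + c))⁻¹) ^ s)
            * ((t + φ w)⁻¹ * (t + φ (w + c))⁻¹) := by ring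
        _ = _ := by rw [h3]; ring
    rw [step]
    -- boundary terms factor as (sum over `c`) * (sum over `w`)
    have left0 (m : ℕ) : ∑ c ∈ (Finset.univ : Finset W).erase 0, ∑ w : W,
          ((φ c)⁻¹) ^ (j + 1) * (((t + φ w)⁻¹) ^ m * ((t + φ (w + c))⁻¹) ^ 0)
        = (∑ c ∈ (Finset.univ : Finset W).erase 0, ((φ c)⁻¹) ^ (j + 1))
          * ∑ w : W, ((t + φ w)⁻¹) ^ m := by
      rw [Finset.sum_mul]
      refine Finset.sum_congr rfl fun c _ => ?_
      rw [Finset.mul_sum]; simp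
    have right0 (m : ℕ) : ∑ c ∈ (Finset.univ : Finset W).erase 0, ∑ w : W,
          ((φ c)⁻¹) ^ (j + 1) * (((t + φ w)⁻¹) ^ 0 * ((t + φ (w + c))⁻¹) ^ m)
        = (∑ c ∈ (Finset.univ : Finset W).erase 0, ((φ c)⁻¹) ^ (j + 1))
          * ∑ w : W, ((t + φ w)⁻¹) ^ m := by
      rw [Finset.sum_mul]
      refine Finset.sum_congr rfl fun c _ => ?_
      rw [← shift m c, Finset.mul_sum]; simp
    rcases Nat.eq_zero_or_pos r with rfl | hr' <;> rcases Nat.eq_zero_or_pos s with rfl | hs'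
    · rw [left0, right0, sub_self]
    · rw [ih (j + 1) _ s (by omega) (by omega) hs' (by omega), right0,
        sum_inv_pow_eq_zero φ (by omega) (by omega)]
      simp
    · rw [ih (j + 1) r _ (by omega) hr' (by omega) (by omega), left0,
        sum_inv_pow_eq_zero φ (by omega) (by omega)]
      simp
    · rw [ih (j + 1) _ s (by omega) (by omega) hs' (by omega),
        ih (j + 1) r _ (by omega) hr' (by omega) (by omega), sub_self]

/-- The product of two power sums, minus the diagonal part, is the off-diagonal sum, parametrised
by the difference `c ≠ 0` of the two points. -/
theorem powerSum_mul {F K W : Type*} [Field F] [Fintype F] [Field K] [Algebra F K]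
    [AddCommGroup W] [Module F W] [Fintype W] (φ : W →ₗ[F] K) (t : K)
    (hφ : Function.Injective φ) (ht : ∀ w, t + φ w ≠ 0) {r s : ℕ} (hr : 1 ≤ r) (hs : 1 ≤ s)
    (hq : r + s ≤ Fintype.card F) :
    (∑ w : W, ((t + φ w)⁻¹) ^ r) * (∑ w : W, ((t + φ w)⁻¹) ^ s)
      = ∑ w : W, ((t + φ w)⁻¹) ^ (r + s) := by
  classical
  have h0 := offDiag_sum_eq_zero φ t hφ ht (r + s) 0 r s rfl hr hs (by omega)
  simp only [pow_zero, one_mul] at h0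
  have h1 : (∑ w : W, ((t + φ w)⁻¹) ^ r) * (∑ w : W, ((t + φ w)⁻¹) ^ s)
      = ∑ c : W, ∑ w : W, ((t + φ w)⁻¹) ^ r * ((t + φ (w + c))⁻¹) ^ s := by
    rw [Finset.sum_comm, Finset.sum_mul]
    refine Finset.sum_congr rfl fun w _ => ?_
    rw [Finset.mul_sum]
    exact (Fintype.sum_equiv (Equiv.addLeft w) _ _ (fun c => rfl)).symm
  rw [h1, ← Finset.add_sum_erase _ _ (Finset.mem_univ (0 : W)), h0, add_zero]
  simp [pow_add]

/-- Reduction of the general case to `powerSum_mul` by the `pᵉ`-Frobenius. -/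
theorem powerSum_mul_of_dvd {F K W : Type*} [Field F] [Fintype F] [Field K] [Algebra F K]
    [AddCommGroup W] [Module F W] [Fintype W] (φ : W →ₗ[F] K) (t : K)
    (hφ : Function.Injective φ) (ht : ∀ w, t + φ w ≠ 0) {r s e : ℕ} (hr : 1 ≤ r) (hs : 1 ≤ s)
    (hre : ringChar F ^ e ∣ r) (hse : ringChar F ^ e ∣ s)
    (hq : r / ringChar F ^ e + s / ringChar F ^ e ≤ Fintype.card F) :
    (∑ w : W, ((t + φ w)⁻¹) ^ r) * (∑ w : W, ((t + φ w)⁻¹) ^ s)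
      = ∑ w : W, ((t + φ w)⁻¹) ^ (r + s) := by
  obtain ⟨r, rfl⟩ := hre
  obtain ⟨s, rfl⟩ := hse
  have : Fact (ringChar F).Prime := ⟨CharP.char_is_prime F _⟩
  have : CharP K (ringChar F) := charP_of_injective_algebraMap (algebraMap F K).injective _
  have hp : 0 < ringChar F ^ e := pow_pos (Fact.out : (ringChar F).Prime).pos e
  rw [Nat.mul_div_cancel_left _ hp, Nat.mul_div_cancel_left _ hp] at hq
  have frob (m : ℕ) : ∑ w : W, ((t + φ w)⁻¹) ^ (ringChar F ^ e * m)
      = (∑ w : W, ((t + φ w)⁻¹) ^ m) ^ (ringChar F ^ e) := by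
    rw [sum_pow_char_pow]
    exact Finset.sum_congr rfl fun w _ => by rw [← pow_mul, mul_comm]
  rw [← mul_add, frob, frob, frob, ← mul_pow, powerSum_mul φ t hφ ht
    (Nat.pos_of_mul_pos_left hr) (Nat.pos_of_mul_pos_left hs) hq]

/-! ### Monic polynomials evaluated in `k_∞` -/

theorem valuation_theta : Valued.v (theta Fq) = WithZero.exp (1 : ℤ) := by
  have := LaurentSeries.valuation_single_zpow Fq (-1)
  simpa [theta] using this

/-- Nonzero constants are roots of unity, so they have valuation `1`. -/
theorem valuation_isTrivialOn :
    (Valued.v : Valuation (Kinf Fq) (WithZero (Multiplicative ℤ))).IsTrivialOn Fq := by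
  refine ⟨fun a ha => ?_⟩
  have h1 : Valued.v (algebraMap Fq (Kinf Fq) a) ^ (Fintype.card Fq - 1)
      = (1 : WithZero (Multiplicative ℤ)) := by
    rw [← map_pow, ← map_pow, FiniteField.pow_card_sub_one_eq_one a ha, map_one, map_one]
  have h2 : Fintype.card Fq - 1 ≠ 0 := by
    have := Fintype.one_lt_card (α := Fq); omega
  exact (pow_eq_one_iff_of_nonneg zero_le h2).mp h1

theorem valuation_aeval_theta {a : Polynomial Fq} (ha : a ≠ 0) :
    Valued.v (Polynomial.aeval (theta Fq) a) = WithZero.exp (a.natDegree : ℤ) := by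
  have := valuation_isTrivialOn Fq
  rw [Polynomial.valuation_aeval_eq_valuation_X_pow_natDegree_of_one_lt_valuation_X (theta Fq)
    (by rw [valuation_theta, ← WithZero.exp_zero, WithZero.exp_lt_exp]; exact one_pos) ha, valuation_theta, ← WithZero.exp_nsmul]
  simp

instance (d : ℕ) : Finite (Polynomial.degreeLT Fq d) :=
  Finite.of_equiv _ (Polynomial.degreeLTEquiv Fq d).toEquiv.symm

instance (d : ℕ) : Fintype (Polynomial.degreeLT Fq d) := Fintype.ofFinite _

instance : NonarchimedeanRing (Kinf Fq) := by
  have h := (Valued.v : Valuation (Kinf Fq)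
    (WithZero (Multiplicative ℤ))).subgroups_basis.nonarchimedean
  have htop : (inferInstance : TopologicalSpace (Kinf Fq)) = _ :=
    congrArg (fun u => u.toTopologicalSpace)
      (Valued.toUniformSpace_eq (Kinf Fq) (WithZero (Multiplicative ℤ)))
  exact htop.symm ▸ h

/-- Index set for the monic polynomials, graded by degree: `⟨d, w⟩` stands for `X ^ d + w`,
where `deg w < d`. -/
abbrev MonicIdx := Σ d : ℕ, Polynomial.degreeLT Fq d

variable {Fq}

/-- The monic polynomial `X ^ d + w` indexed by `⟨d, w⟩`. -/
def monicPoly (x : MonicIdx Fq) : Polynomial Fq := Polynomial.X ^ x.1 + x.2.1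

theorem monicPoly_monic (x : MonicIdx Fq) : (monicPoly x).Monic :=
  Polynomial.monic_X_pow_add (Polynomial.mem_degreeLT.1 x.2.2)

theorem natDegree_monicPoly (x : MonicIdx Fq) : (monicPoly x).natDegree = x.1 :=
  ((Polynomial.monicEquivDegreeLT x.1).symm x.2).2.2

theorem degree_monicPoly (x : MonicIdx Fq) : (monicPoly x).degree = x.1 := by
  rw [Polynomial.degree_eq_natDegree (monicPoly_monic x).ne_zero, natDegree_monicPoly]

theorem monicPoly_injective : Function.Injective (monicPoly (Fq := Fq)) := by
  rintro ⟨d, w⟩ ⟨d', w'⟩ h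
  have hd : d = d' := by
    have := congrArg Polynomial.natDegree h
    rwa [natDegree_monicPoly, natDegree_monicPoly] at this
  subst hd
  have : w = w' := Subtype.ext (add_left_cancel h)
  rw [this]

theorem exists_monicPoly {a : Polynomial Fq} (ha : a.Monic) : ∃ x, monicPoly x = a :=
  ⟨⟨a.natDegree, Polynomial.monicEquivDegreeLT a.natDegree ⟨a, ha, rfl⟩⟩,
    congrArg Subtype.val
      ((Polynomial.monicEquivDegreeLT a.natDegree).symm_apply_apply ⟨a, ha, rfl⟩)⟩

/-- `1 / a(θ) ^ n`, for the monic polynomial `a` indexed by `x`. -/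
def zterm (n : ℕ) (x : MonicIdx Fq) : Kinf Fq :=
  ((Polynomial.aeval (theta Fq) (monicPoly x))⁻¹) ^ n

theorem valuation_zterm (n : ℕ) (x : MonicIdx Fq) :
    Valued.v (zterm n x) = WithZero.exp (-(n * x.1 : ℤ)) := by
  rw [zterm, map_pow, map_inv₀, valuation_aeval_theta Fq (monicPoly_monic x).ne_zero,
    natDegree_monicPoly, ← WithZero.exp_neg, ← WithZero.exp_nsmul]
  simp

/-! ### Summability and reindexing of the zeta sums -/

/-- There are finitely many monic polynomials of each degree, and `v (a⁻ⁿ) = exp (-n deg a)`, so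
the terms tend to `0` along the cofinite filter; `k_∞` is complete and nonarchimedean. -/
theorem summable_zterm {n : ℕ} (hn : 1 ≤ n) : Summable (zterm (Fq := Fq) n) := by
  apply NonarchimedeanAddGroup.summable_of_tendsto_cofinite_zero
  rw [(Valued.hasBasis_nhds_zero (Kinf Fq) (WithZero (Multiplicative ℤ))).tendsto_right_iff]
  intro γ _
  rw [Filter.eventually_cofinite]
  -- the nonzero threshold `γ` is bounded below by some `exp (-N)`
  obtain ⟨N, hN⟩ : ∃ N : ℕ, ∀ y : Kinf Fq, Valued.v y < WithZero.exp (-(N : ℤ)) →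
      (Valued.v : Valuation (Kinf Fq) (WithZero (Multiplicative ℤ))).restrict y < γ.1 := by
    have h0 := MonoidWithZeroHom.ValueGroup₀.embedding_unit_ne_zero γ
    refine ⟨(WithZero.log (MonoidWithZeroHom.ValueGroup₀.embedding γ.1)).natAbs, fun y hy => ?_⟩
    rw [Valuation.restrict_lt_iff_lt_embedding]
    refine hy.trans_le ?_
    rw [← WithZero.le_log_iff_exp_le h0]
    omega
  have hfin : (Set.range fun x : Σ d : Fin (N + 1), Polynomial.degreeLT Fq d =>
      (⟨x.1, x.2⟩ : MonicIdx Fq)).Finite := Set.finite_range _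
  refine hfin.subset ?_
  rintro ⟨d, w⟩ hx
  by_cases hd : d < N + 1
  · exact ⟨⟨⟨d, hd⟩, w⟩, rfl⟩
  · refine absurd (hN _ ?_) hx
    rw [valuation_zterm, WithZero.exp_lt_exp]
    have : d ≤ n * d := Nat.le_mul_of_pos_left d hn
    have hlt : (N : ℤ) < (n : ℤ) * d := by exact_mod_cast (by omega : N < n * d)
    exact neg_lt_neg hlt

/-- `1 / (a(θ) ^ m * b(θ) ^ n)`, for the pair `(a, b)` of monic polynomials indexed by `p`. -/
def pairTerm (m n : ℕ) (p : MonicIdx Fq × MonicIdx Fq) : Kinf Fq := zterm m p.1 * zterm n p.2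

theorem summable_pairTerm {m n : ℕ} (hm : 1 ≤ m) (hn : 1 ≤ n) :
    Summable (pairTerm (Fq := Fq) m n) :=
  (summable_zterm hm).mul_of_nonarchimedean (summable_zterm hn)

theorem mzv_one (n : ℕ) : mzv Fq 1 ![n] = ∑' x : MonicIdx Fq, zterm n x := by
  let g : MonicIdx Fq → {a : Fin 1 → Polynomial Fq //
      (∀ i, (a i).Monic) ∧ ∀ i j : Fin 1, i < j → (a j).degree < (a i).degree} :=
    fun x => ⟨fun _ => monicPoly x, fun _ => monicPoly_monic x, fun i j hij => by omega⟩
  have hg : Function.Bijective g := by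
    constructor
    · intro x y hxy
      exact monicPoly_injective (congrFun (congrArg Subtype.val hxy) 0)
    · rintro ⟨a, ha, _⟩
      obtain ⟨x, hx⟩ := exists_monicPoly (ha 0)
      refine ⟨x, Subtype.ext (funext fun i => ?_)⟩
      rw [Subsingleton.elim i 0]; exact hx
  rw [mzv, ← (Equiv.ofBijective g hg).tsum_eq]
  refine tsum_congr fun x => ?_
  simp [g, zterm]

theorem mzv_two (m n : ℕ) : mzv Fq 2 ![m, n]
    = ∑' p : {p : MonicIdx Fq × MonicIdx Fq | p.2.1 < p.1.1}, pairTerm m n p.1 := by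
  let g : {p : MonicIdx Fq × MonicIdx Fq | p.2.1 < p.1.1} → {a : Fin 2 → Polynomial Fq //
      (∀ i, (a i).Monic) ∧ ∀ i j : Fin 2, i < j → (a j).degree < (a i).degree} :=
    fun p => ⟨![monicPoly p.1.1, monicPoly p.1.2],
      by intro i; fin_cases i <;> exact monicPoly_monic _,
      by
        have h : (monicPoly p.1.2).degree < (monicPoly p.1.1).degree := by
          rw [degree_monicPoly, degree_monicPoly]
          exact_mod_cast p.2
        intro i j hij
        fin_cases i <;> fin_cases j
        all_goals first | exact h | exact absurd hij (by decide)⟩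
  have hg : Function.Bijective g := by
    constructor
    · intro x y hxy
      have h := congrArg Subtype.val hxy
      exact Subtype.ext (Prod.ext (monicPoly_injective (congrFun h 0))
        (monicPoly_injective (congrFun h 1)))
    · rintro ⟨a, ha, hlt⟩
      obtain ⟨x, hx⟩ := exists_monicPoly (ha 0)
      obtain ⟨y, hy⟩ := exists_monicPoly (ha 1)
      have h := hlt 0 1 (by decide)
      rw [← hx, ← hy, degree_monicPoly, degree_monicPoly] at h
      refine ⟨⟨(x, y), by exact_mod_cast h⟩, Subtype.ext (funext fun i => ?_)⟩
      fin_cases i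
      · exact hx
      · exact hy
  rw [mzv, ← (Equiv.ofBijective g hg).tsum_eq]
  refine tsum_congr fun x => ?_
  simp [g, pairTerm, zterm, mul_comm]

/-! ### The pairs of equal degree -/

/-- The power sums `S_d(n) = ∑ a⁻ⁿ` over monic `a` of degree `d` satisfy
`S_d(n₁) S_d(n₂) = S_d(n₁ + n₂)`: these `a` form the translate by `θ ^ d` of the image of the
polynomials of degree less than `d`. -/
theorem degree_powerSum_mul {n₁ n₂ e : ℕ} (hn₁ : 1 ≤ n₁) (hn₂ : 1 ≤ n₂)
    (h₁ : ringChar Fq ^ e ∣ n₁) (h₂ : ringChar Fq ^ e ∣ n₂)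
    (hq : n₁ / ringChar Fq ^ e + n₂ / ringChar Fq ^ e ≤ Fintype.card Fq) (d : ℕ) :
    (∑ w : Polynomial.degreeLT Fq d, zterm n₁ ⟨d, w⟩)
        * (∑ w : Polynomial.degreeLT Fq d, zterm n₂ ⟨d, w⟩)
      = ∑ w : Polynomial.degreeLT Fq d, zterm (n₁ + n₂) ⟨d, w⟩ := by
  let φ := (Polynomial.aeval (R := Fq) (theta Fq)).toLinearMap ∘ₗ
    (Polynomial.degreeLT Fq d).subtype
  have hne {a : Polynomial Fq} (ha : a ≠ 0) : Polynomial.aeval (theta Fq) a ≠ 0 := fun h0 => by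
    have := valuation_aeval_theta Fq ha
    rw [h0, map_zero] at this
    exact WithZero.exp_ne_zero this.symm
  have hφ : Function.Injective φ := by
    rw [injective_iff_map_eq_zero]
    intro w hw
    by_contra h0
    exact hne (fun h => h0 (Subtype.ext h)) hw
  have hterm (n : ℕ) (w : Polynomial.degreeLT Fq d) :
      zterm n ⟨d, w⟩ = ((theta Fq ^ d + φ w)⁻¹) ^ n := by
    simp [zterm, monicPoly, φ]
  have ht (w : Polynomial.degreeLT Fq d) : theta Fq ^ d + φ w ≠ 0 := by
    have := hne (monicPoly_monic ⟨d, w⟩).ne_zero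
    simpa [monicPoly, φ] using this
  simp only [hterm]
  exact powerSum_mul_of_dvd φ (theta Fq ^ d) hφ ht hn₁ hn₂ h₁ h₂ hq

/-- The pair of monic polynomials of common degree `d` indexed by `⟨d, w, v⟩`. -/
def diagPair (x : Σ d : ℕ, Polynomial.degreeLT Fq d × Polynomial.degreeLT Fq d) :
    MonicIdx Fq × MonicIdx Fq := (⟨x.1, x.2.1⟩, ⟨x.1, x.2.2⟩)

theorem diagPair_injective : Function.Injective (diagPair (Fq := Fq)) := by
  rintro ⟨d, w, w'⟩ ⟨d', v, v'⟩ h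
  simp only [diagPair, Prod.mk.injEq, Sigma.mk.injEq] at h
  obtain ⟨⟨rfl, h1⟩, -, h2⟩ := h
  rw [eq_of_heq h1, eq_of_heq h2]

theorem summable_pairTerm_diagPair {m n : ℕ} (hm : 1 ≤ m) (hn : 1 ≤ n) :
    Summable fun x => pairTerm m n (diagPair (Fq := Fq) x) :=
  (summable_pairTerm (Fq := Fq) hm hn).comp_injective diagPair_injective

theorem range_diagPair : Set.range (diagPair (Fq := Fq)) = {p | p.1.1 = p.2.1} := by
  ext ⟨⟨d, w⟩, ⟨d', w'⟩⟩
  constructor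
  · rintro ⟨x, hx⟩
    rw [← hx]; rfl
  · intro h
    obtain rfl : d = d' := h
    exact ⟨⟨d, w, w'⟩, rfl⟩

theorem tsum_pairTerm_diagPair (m n : ℕ) :
    ∑' p : {p : MonicIdx Fq × MonicIdx Fq | p.1.1 = p.2.1}, pairTerm m n p.1
      = ∑' x, pairTerm m n (diagPair (Fq := Fq) x) := by
  rw [← range_diagPair, tsum_range (pairTerm m n) diagPair_injective]

/-- Summation of `degree_powerSum_mul` over all degrees `d`. -/
theorem tsum_diag {n₁ n₂ e : ℕ} (hn₁ : 1 ≤ n₁) (hn₂ : 1 ≤ n₂)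
    (h₁ : ringChar Fq ^ e ∣ n₁) (h₂ : ringChar Fq ^ e ∣ n₂)
    (hq : n₁ / ringChar Fq ^ e + n₂ / ringChar Fq ^ e ≤ Fintype.card Fq) :
    ∑' p : {p : MonicIdx Fq × MonicIdx Fq | p.1.1 = p.2.1}, pairTerm n₁ n₂ p.1
      = ∑' x : MonicIdx Fq, zterm (n₁ + n₂) x := by
  have hn : 1 ≤ n₁ + n₂ := by omega
  rw [tsum_pairTerm_diagPair, (summable_pairTerm_diagPair (Fq := Fq) hn₁ hn₂).tsum_sigma,
    (summable_zterm (Fq := Fq) hn).tsum_sigma]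
  refine tsum_congr fun d => ?_
  rw [tsum_fintype, tsum_fintype, ← degree_powerSum_mul hn₁ hn₂ h₁ h₂ hq d,
    Finset.sum_mul_sum, Fintype.sum_prod_type]
  rfl

variable (Fq)

/-- harmonic shuffle. If `p^e ∣ n₁`, `p^e ∣ n₂` and
`n₁/p^e + n₂/p^e ≤ q` for some `e ≥ 0`, then
`ζ(n₁)·ζ(n₂) = ζ(n₁,n₂) + ζ(n₂,n₁) + ζ(n₁+n₂)`. -/
theorem mzv_harmonic_shuffle
    (n₁ n₂ : ℕ) (hn₁ : 1 ≤ n₁) (hn₂ : 1 ≤ n₂)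
    (h : ∃ e : ℕ, ringChar Fq ^ e ∣ n₁ ∧ ringChar Fq ^ e ∣ n₂ ∧
      n₁ / ringChar Fq ^ e + n₂ / ringChar Fq ^ e ≤ Fintype.card Fq) :
    mzv Fq 1 ![n₁] * mzv Fq 1 ![n₂] =
      mzv Fq 2 ![n₁, n₂] + mzv Fq 2 ![n₂, n₁] + mzv Fq 1 ![n₁ + n₂] := by
  obtain ⟨e, h₁, h₂, hq⟩ := h
  let F : MonicIdx Fq × MonicIdx Fq → Kinf Fq := pairTerm n₁ n₂
  have hF : Summable F := summable_pairTerm hn₁ hn₂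
  have hsplit : F = fun p =>
      ({p | p.2.1 < p.1.1} : Set (MonicIdx Fq × MonicIdx Fq)).indicator F p
      + ({p | p.1.1 < p.2.1} : Set (MonicIdx Fq × MonicIdx Fq)).indicator F p
      + ({p | p.1.1 = p.2.1} : Set (MonicIdx Fq × MonicIdx Fq)).indicator F p := by
    funext p
    rcases lt_trichotomy p.1.1 p.2.1 with h | h | h
    · simp [Set.indicator, h, h.not_gt, h.ne]
    · simp [Set.indicator, h]
    · simp [Set.indicator, h, h.not_gt, h.ne']
  have hswap : mzv Fq 2 ![n₂, n₁]
      = ∑' p : {p : MonicIdx Fq × MonicIdx Fq | p.1.1 < p.2.1}, F p := by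
    rw [mzv_two, tsum_subtype _ F, tsum_subtype {p : MonicIdx Fq × MonicIdx Fq | p.2.1 < p.1.1}
      (pairTerm n₂ n₁),
      ← (Equiv.prodComm (MonicIdx Fq) (MonicIdx Fq)).tsum_eq]
    refine tsum_congr fun p => ?_
    simp [Set.indicator, F, pairTerm, mul_comm]
  have hdiag : mzv Fq 1 ![n₁ + n₂]
      = ∑' p : {p : MonicIdx Fq × MonicIdx Fq | p.1.1 = p.2.1}, F p := by
    rw [mzv_one, ← tsum_diag hn₁ hn₂ h₁ h₂ hq]
  have htwo : mzv Fq 2 ![n₁, n₂]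
      = ∑' p : {p : MonicIdx Fq × MonicIdx Fq | p.2.1 < p.1.1}, F p := mzv_two n₁ n₂
  rw [hdiag, hswap, htwo, mzv_one, mzv_one,
    tsum_mul_tsum_of_nonarchimedean (summable_zterm hn₁) (summable_zterm hn₂),
    tsum_subtype _ F, tsum_subtype _ F, tsum_subtype _ F,
    ← (hF.indicator _).tsum_add (hF.indicator _),
    ← ((hF.indicator _).add (hF.indicator _)).tsum_add (hF.indicator _)]
  exact congrArg (fun f => ∑' p, f p) hsplit
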